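/- (Titchmarsh convolution theorem) Let ξ₁, ξ₂ ∈ L¹_ℂ(ℝ) with supp(ξ_l) ⊂ [0,∞) for l = 1,2, and suppose for some constant a > 0 that ∫₀^s ξ₁(s−τ) ξ₂(τ) dτ = 0 for almost all s ∈ [0,a]. Then there exist nonnegative constants a₁ and a₂ with a₁ + a₂ ≥ a such that ξ₁(τ) = 0 for almost all τ ∈ [0,a₁] and ξ₂(τ) = 0 for almost all τ ∈ [0,a₂]. -/

import Mathlib

open MeasureTheory Complex Set Filter Topology

lemma tc_sin_span (Q : Polynomial ℝ) :
    (fun θ : ℝ => Real.sin θ * Q.eval (Real.cos θ)) ∈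
      Submodule.span ℝ (Set.range fun (n : ℕ) (θ : ℝ) => Real.sin ((n + 1 : ℝ) * θ)) := by
  induction Q using Polynomial.induction_on with
  | C a =>
    have : (fun θ : ℝ => Real.sin θ * (Polynomial.C a).eval (Real.cos θ)) =
      a • (fun (θ : ℝ) => Real.sin (((0 : ℕ) + 1 : ℝ) * θ)) := by
      funext θ; simp [mul_comm]
    rw [this]
    exact Submodule.smul_mem _ _ (Submodule.subset_span ⟨0, rfl⟩)
  | add p q hp hq =>
    have := Submodule.add_mem _ hp hq
    convert this using 1
    funext θ; simp [mul_add]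
  | monomial n a h =>
    have key : ∀ f ∈ Submodule.span ℝ
        (Set.range fun (n : ℕ) (θ : ℝ) => Real.sin ((n + 1 : ℝ) * θ)),
        (fun θ => f θ * Real.cos θ) ∈ Submodule.span ℝ
        (Set.range fun (n : ℕ) (θ : ℝ) => Real.sin ((n + 1 : ℝ) * θ)) := by
      intro f hf
      induction hf using Submodule.span_induction with
      | mem x hx =>
        obtain ⟨k, rfl⟩ := hx
        rcases k with _ | k
        · have : (fun θ : ℝ => Real.sin (((0 : ℕ) + 1 : ℝ) * θ) * Real.cos θ) =
            (1/2 : ℝ) • (fun (θ : ℝ) => Real.sin (((1 : ℕ) + 1 : ℝ) * θ)) := by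
            funext θ
            simp only [Pi.smul_apply, smul_eq_mul]
            have : (((1 : ℕ) + 1 : ℝ) * θ) = 2 * θ := by push_cast; ring
            rw [this, Real.sin_two_mul]; simp; ring
          rw [this]
          exact Submodule.smul_mem _ _ (Submodule.subset_span ⟨1, rfl⟩)
        · have : (fun θ : ℝ => Real.sin (((k + 1 : ℕ) + 1 : ℝ) * θ) * Real.cos θ) =
            (1/2 : ℝ) • (fun (θ : ℝ) => Real.sin (((k + 2 : ℕ) + 1 : ℝ) * θ)) +
            (1/2 : ℝ) • (fun (θ : ℝ) => Real.sin (((k : ℕ) + 1 : ℝ) * θ)) := by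
            funext θ
            simp only [Pi.smul_apply, Pi.add_apply, smul_eq_mul]
            have e1 : (((k + 2 : ℕ) + 1 : ℝ) * θ) = ((k + 1 : ℕ) + 1 : ℝ) * θ + θ := by
              push_cast; ring
            have e2 : (((k : ℕ) + 1 : ℝ) * θ) = ((k + 1 : ℕ) + 1 : ℝ) * θ - θ := by
              push_cast; ring
            rw [e1, e2, Real.sin_add, Real.sin_sub]; ring
          rw [this]
          exact Submodule.add_mem _ (Submodule.smul_mem _ _ (Submodule.subset_span ⟨_, rfl⟩))
            (Submodule.smul_mem _ _ (Submodule.subset_span ⟨_, rfl⟩))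
      | zero => convert Submodule.zero_mem _ using 1; funext θ; simp
      | add x y _ _ hx hy =>
        convert Submodule.add_mem _ hx hy using 1
        funext θ; simp [add_mul]
      | smul a x _ hx =>
        convert Submodule.smul_mem _ a hx using 1
        funext θ; simp [mul_assoc]
    convert key _ h using 1
    funext θ; simp [pow_succ]; ring

lemma tc_sin_exp (Q : Polynomial ℝ) : ∃ (s : Finset ℕ) (b : ℕ → ℝ), 0 ∈ s ∧ ∀ θ : ℝ,
    Real.sin θ * Q.eval (Real.cos θ) = ∑ n ∈ s, b n * Real.sin ((n + 1 : ℝ) * θ) := by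
  obtain ⟨c, hc⟩ := Finsupp.mem_span_range_iff_exists_finsupp.1 (tc_sin_span Q)
  refine ⟨insert 0 c.support, c, Finset.mem_insert_self _ _, fun θ => ?_⟩
  have h := congrFun hc θ
  rw [Finsupp.sum_of_support_subset c (Finset.subset_insert 0 c.support) _ (by simp)] at h
  rw [← h, Finset.sum_apply]
  rfl

lemma tc_int_cos (k : ℤ) (hk : k ≠ 0) : ∫ θ in (0:ℝ)..Real.pi, Real.cos (k * θ) = 0 := by
  have hk' : (k : ℝ) ≠ 0 := by exact_mod_cast hk
  rw [intervalIntegral.integral_comp_mul_left (fun x => Real.cos x) hk']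
  simp

lemma tc_orth (m n : ℕ) : ∫ θ in (0:ℝ)..Real.pi,
    Real.sin ((m + 1 : ℝ) * θ) * Real.sin ((n + 1 : ℝ) * θ) = if m = n then Real.pi / 2 else 0 := by
  have h : ∀ θ : ℝ, Real.sin ((m + 1 : ℝ) * θ) * Real.sin ((n + 1 : ℝ) * θ) =
      (1/2) * Real.cos (((m - n : ℤ) : ℝ) * θ) - (1/2) * Real.cos (((m + n + 2 : ℤ) : ℝ) * θ) := by
    intro θ
    have e1 : (((m - n : ℤ) : ℝ) * θ) = (m + 1 : ℝ) * θ - (n + 1 : ℝ) * θ := by push_cast; ring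
    have e2 : (((m + n + 2 : ℤ) : ℝ) * θ) = (m + 1 : ℝ) * θ + (n + 1 : ℝ) * θ := by push_cast; ring
    rw [e1, e2, Real.cos_sub, Real.cos_add]; ring
  simp_rw [h]
  rw [intervalIntegral.integral_sub, intervalIntegral.integral_const_mul,
    intervalIntegral.integral_const_mul, tc_int_cos (m + n + 2) (by omega)]
  · split_ifs with hmn
    · subst hmn; simp; ring
    · rw [tc_int_cos _ (by omega)]; simp
  · exact (by fun_prop : Continuous _).intervalIntegrable _ _
  · exact (by fun_prop : Continuous _).intervalIntegrable _ _

lemma tc_abs_sin (n : ℕ) (θ : ℝ) : |Real.sin ((n + 1 : ℝ) * θ)| ≤ (n + 1) * |Real.sin θ| := by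
  induction n with
  | zero => simp
  | succ k ih =>
    have e : (((k + 1 : ℕ) + 1 : ℝ) * θ) = (k + 1 : ℝ) * θ + θ := by push_cast; ring
    rw [e, Real.sin_add]
    refine (abs_add_le _ _).trans ?_
    rw [abs_mul, abs_mul]
    have h1 := Real.abs_cos_le_one θ
    have h2 := Real.abs_cos_le_one ((k + 1 : ℝ) * θ)
    push_cast
    nlinarith [abs_nonneg (Real.sin θ), abs_nonneg (Real.sin ((k + 1 : ℝ) * θ))]

lemma tc_im_pow (n : ℕ) (z : ℂ) : |(z ^ (n + 1)).im| ≤ (n + 1) * (|z.im| * ‖z‖ ^ n) := by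
  induction n with
  | zero => simp
  | succ k ih =>
    rw [pow_succ, Complex.mul_im]
    refine (abs_add_le _ _).trans ?_
    rw [abs_mul, abs_mul]
    have h1 : |(z ^ (k + 1)).re| ≤ ‖z‖ ^ (k + 1) := by
      rw [← norm_pow]; exact Complex.abs_re_le_norm _
    have h2 := Complex.abs_re_le_norm z
    have h3 := mul_le_mul ih h2 (abs_nonneg _) (by positivity)
    have h4 := mul_le_mul_of_nonneg_right h1 (abs_nonneg z.im)
    push_cast
    calc _ ≤ ‖z‖ ^ (k + 1) * |z.im| + (k + 1) * (|z.im| * ‖z‖ ^ k) * ‖z‖ := add_le_add h4 h3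
      _ = _ := by ring

lemma tc_coef (Q : Polynomial ℝ) (s : Finset ℕ) (b : ℕ → ℝ)
    (h : ∀ θ : ℝ, Real.sin θ * Q.eval (Real.cos θ) = ∑ n ∈ s, b n * Real.sin ((n + 1 : ℝ) * θ))
    (m : ℕ) (hm : m ∈ s) : b m = (2 / Real.pi) * ∫ θ in (0:ℝ)..Real.pi,
      Real.sin θ * Q.eval (Real.cos θ) * Real.sin ((m + 1 : ℝ) * θ) := by
  simp_rw [h, Finset.sum_mul]
  rw [intervalIntegral.integral_finsetSum
    (fun i _ => (by fun_prop : Continuous _).intervalIntegrable _ _)]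
  simp_rw [mul_assoc, intervalIntegral.integral_const_mul, tc_orth]
  simp [hm]
  field_simp

lemma tc_const : ∃ K : ℝ, 0 ≤ K ∧ ∀ (s : Finset ℕ) (ρ : ℝ), 0 ≤ ρ → ρ ≤ 1/2 →
    ∑ n ∈ s.erase 0, ((n : ℝ) + 1) ^ 2 * ρ ^ n ≤ K * ρ := by
  have hsum : Summable (fun n : ℕ => 2 * (((n : ℝ) + 1) ^ 2 * (1/2 : ℝ) ^ n)) := by
    apply Summable.mul_left
    have h : ∀ k : ℕ, Summable (fun n : ℕ => (n : ℝ) ^ k * (1/2 : ℝ) ^ n) := fun k =>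
      summable_pow_mul_geometric_of_norm_lt_one k (by norm_num)
    have := ((h 2).add ((h 1).mul_left 2)).add (h 0)
    refine this.congr fun n => ?_
    ring
  refine ⟨∑' n : ℕ, 2 * (((n : ℝ) + 1) ^ 2 * (1/2 : ℝ) ^ n),
    tsum_nonneg fun n => by positivity, fun s ρ h0 h1 => ?_⟩
  calc ∑ n ∈ s.erase 0, ((n : ℝ) + 1) ^ 2 * ρ ^ n
      ≤ ∑ n ∈ s.erase 0, (2 * (((n : ℝ) + 1) ^ 2 * (1/2 : ℝ) ^ n)) * ρ := by
        refine Finset.sum_le_sum fun n hn => ?_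
        obtain ⟨k, rfl⟩ := Nat.exists_eq_succ_of_ne_zero (Finset.ne_of_mem_erase hn)
        have : ρ ^ k ≤ (1/2 : ℝ) ^ k := by gcongr
        calc _ = (((k.succ : ℕ) : ℝ) + 1) ^ 2 * ρ * ρ ^ k := by rw [Nat.succ_eq_add_one, pow_succ]; ring
          _ ≤ (((k.succ : ℕ) : ℝ) + 1) ^ 2 * ρ * (1/2 : ℝ) ^ k := by gcongr
          _ = _ := by rw [Nat.succ_eq_add_one, pow_succ]; ring
    _ ≤ _ := by
        rw [← Finset.sum_mul]
        gcongr
        exact hsum.sum_le_tsum _ fun n _ => by positivity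

lemma tc_maxmod (F : ℂ → ℂ) (hF : Differentiable ℂ F) (hF1 : ∀ z : ℂ, 0 ≤ z.im → ‖F z‖ ≤ 1)
    (R : ℝ) (hR : 0 < R) (s : Finset ℕ) (b : ℕ → ℝ)
    (hb : ∀ θ ∈ Set.Icc 0 Real.pi, ‖F (R * Complex.exp (θ * I))‖ ≤
      Real.exp (∑ n ∈ s, b n * Real.sin ((n + 1 : ℝ) * θ)))
    (z : ℂ) (hz : 0 < z.im) (hzR : ‖z‖ < R) :
    ‖F z‖ ≤ Real.exp (∑ n ∈ s, b n * ((z / R) ^ (n + 1)).im) := by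
  set P : ℂ → ℂ := fun w => ∑ n ∈ s, (b n : ℂ) * (w / R) ^ (n + 1) with hP
  have hPim : ∀ w, (P w).im = ∑ n ∈ s, b n * ((w / R) ^ (n + 1)).im := by
    intro w
    simp [hP, Complex.im_sum]
  have hPd : Differentiable ℂ P := by
    rw [hP]; fun_prop
  set g : ℂ → ℂ := fun w => F w * Complex.exp (I * P w) with hg
  have hgn : ∀ w, ‖g w‖ = ‖F w‖ * Real.exp (-(P w).im) := by
    intro w
    simp [hg, Complex.norm_exp]
  have hgd : Differentiable ℂ g := by rw [hg]; fun_prop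
  set U : Set ℂ := Metric.ball 0 R ∩ {w | 0 < w.im} with hU
  have hUo : IsOpen U := Metric.isOpen_ball.inter (isOpen_lt continuous_const Complex.continuous_im)
  have hUc : closure U ⊆ Metric.closedBall 0 R ∩ {w | 0 ≤ w.im} := by
    apply closure_minimal
    · intro w hw
      have h2 : 0 < w.im := hw.2
      exact ⟨Metric.ball_subset_closedBall hw.1, h2.le⟩
    · exact Metric.isClosed_closedBall.inter (isClosed_le continuous_const Complex.continuous_im)
  have key : ‖g z‖ ≤ 1 := by
    refine Complex.norm_le_of_forall_mem_frontier_norm_le (U := U)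
      (Metric.isBounded_ball.subset inter_subset_left) hgd.diffContOnCl ?_
      (subset_closure ⟨by simpa using hzR, hz⟩)
    intro w hw
    rw [hUo.frontier_eq] at hw
    obtain ⟨h1, h2⟩ := hUc hw.1
    simp only [Metric.mem_closedBall, dist_zero_right, Set.mem_ofPred_eq] at h1 h2
    rw [hgn]
    rcases h2.eq_or_lt with h0 | h0
    · have : (P w).im = 0 := by
        rw [hPim]
        refine Finset.sum_eq_zero fun n _ => ?_
        have hw' : w = (w.re : ℂ) := by apply Complex.ext <;> simp [← h0]
        rw [hw', ← Complex.ofReal_div, ← Complex.ofReal_pow, Complex.ofReal_im, mul_zero]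
      rw [this]; simpa using hF1 w h2
    · have hwR : ‖w‖ = R := by
        by_contra hne
        exact hw.2 ⟨by simpa using lt_of_le_of_ne h1 hne, h0⟩
      have hwe : w = R * Complex.exp (w.arg * I) := by
        rw [← hwR]; exact (Complex.norm_mul_exp_arg_mul_I w).symm
      have harg : w.arg ∈ Set.Icc 0 Real.pi := ⟨Complex.arg_nonneg_iff.2 h2, Complex.arg_le_pi w⟩
      have := hb _ harg
      rw [← hwe] at this
      have hPw : (P w).im = ∑ n ∈ s, b n * Real.sin ((n + 1 : ℝ) * w.arg) := by
        rw [hPim]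
        refine Finset.sum_congr rfl fun n _ => ?_
        have hdiv : w / R = Complex.exp (w.arg * I) := by
          have hRc : (R : ℂ) ≠ 0 := by exact_mod_cast hR.ne'
          rw [div_eq_iff hRc, mul_comm]; exact hwe
        rw [hdiv, ← Complex.exp_nat_mul]
        have : ((n + 1 : ℕ) : ℂ) * (w.arg * I) = (((n + 1 : ℝ) * w.arg : ℝ) : ℂ) * I := by
          push_cast; ring
        rw [this, Complex.exp_ofReal_mul_I_im]
      rw [hPw, Real.exp_neg]
      rw [← div_eq_mul_inv, div_le_one (Real.exp_pos _)]
      exact this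
  rw [hgn, Real.exp_neg, ← div_eq_mul_inv, div_le_one (Real.exp_pos _), hPim] at key
  exact key

lemma tc_key_eps (K : ℝ) (hK0 : 0 ≤ K) (hK : ∀ (s : Finset ℕ) (ρ : ℝ), 0 ≤ ρ → ρ ≤ 1/2 →
    ∑ n ∈ s.erase 0, ((n : ℝ) + 1) ^ 2 * ρ ^ n ≤ K * ρ)
    (F : ℂ → ℂ) (hF : Differentiable ℂ F) (hF1 : ∀ z : ℂ, 0 ≤ z.im → ‖F z‖ ≤ 1)
    (R : ℝ) (hR : 0 < R) (ψ : ℝ → ℝ) (hψc : ContinuousOn ψ (Set.Icc (-1) 1))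
    (hψ0 : ∀ c ∈ Set.Icc (-1 : ℝ) 1, ψ c ≤ 0)
    (hψ : ∀ θ ∈ Set.Icc 0 Real.pi, ‖F (R * Complex.exp (θ * I))‖ ≤
      Real.exp (Real.sin θ * ψ (Real.cos θ)))
    (J : ℝ) (hJ : J = (2 / Real.pi) * ∫ θ in (0:ℝ)..Real.pi, Real.sin θ ^ 2 * (-ψ (Real.cos θ)))
    (z : ℂ) (hz : 0 < z.im) (hzR : ‖z‖ ≤ R / 2) (ε : ℝ) (hε : 0 < ε) :
    ‖F z‖ ≤ Real.exp ((z.im / R) * ((-J + 2 * ε) + (J + 2 * ε) * (K * (‖z‖ / R)))) := by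
  have hpi := Real.pi_pos
  obtain ⟨Q, hQ⟩ := exists_polynomial_near_of_continuousOn (-1) 1 (fun c => ψ c + ε)
    (hψc.add continuousOn_const) ε hε
  have hcos : ∀ θ, Real.cos θ ∈ Set.Icc (-1 : ℝ) 1 := Real.cos_mem_Icc
  have hQ1 : ∀ θ, ψ (Real.cos θ) ≤ Q.eval (Real.cos θ) := fun θ => by
    have := abs_lt.1 (hQ _ (hcos θ)); linarith [this.1]
  have hQ2 : ∀ θ, Q.eval (Real.cos θ) ≤ ψ (Real.cos θ) + 2 * ε := fun θ => by
    have := abs_lt.1 (hQ _ (hcos θ)); linarith [this.2]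
  have hψcc : Continuous fun θ => ψ (Real.cos θ) := by
    have := hψc.comp_continuous Real.continuous_cos hcos
    exact this
  obtain ⟨s, b, h0s, hsb⟩ := tc_sin_exp Q
  have hco := tc_coef Q s b hsb
  have hQcc : Continuous fun θ => Q.eval (Real.cos θ) := by fun_prop
  have hη0 : ∀ θ, ψ (Real.cos θ) ≤ 0 := fun θ => hψ0 _ (hcos θ)
  obtain ⟨η, hη⟩ : ∃ η : ℝ → ℝ, ∀ θ, ψ (Real.cos θ) = η θ := ⟨_, fun _ => rfl⟩
  obtain ⟨q, hq⟩ : ∃ q : ℝ → ℝ, ∀ θ, Q.eval (Real.cos θ) = q θ := ⟨_, fun _ => rfl⟩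
  simp only [hη, hq] at hJ hψ hQ1 hQ2 hψcc hQcc hη0 hsb hco
  clear hQ hcos hψ0 hψc hη hq
  have hsin2 : ∫ θ in (0:ℝ)..Real.pi, Real.sin θ ^ 2 = Real.pi / 2 := by
    have := tc_orth 0 0
    simp only [Nat.cast_zero, zero_add, one_mul, ← sq, if_true] at this
    exact this
  -- integral upper bounds
  have hJ' : ∀ t : ℝ, (2 / Real.pi) * ∫ θ in (0:ℝ)..Real.pi,
      Real.sin θ ^ 2 * (t * (-η θ) + 2 * ε) = t * J + 2 * ε := by
    intro t
    have : ∀ θ, Real.sin θ ^ 2 * (t * (-η θ) + 2 * ε) =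
      t * (Real.sin θ ^ 2 * (-η θ)) + (2 * ε) * Real.sin θ ^ 2 := fun θ => by ring
    simp_rw [this]
    rw [intervalIntegral.integral_add, intervalIntegral.integral_const_mul,
      intervalIntegral.integral_const_mul, hsin2, hJ]
    · field_simp
    · exact (by fun_prop : Continuous _).intervalIntegrable _ _
    · exact (by fun_prop : Continuous _).intervalIntegrable _ _
  have hb0 : b 0 ≤ -J + 2 * ε := by
    rw [hco 0 h0s]
    have := hJ' (-1)
    rw [neg_one_mul] at this
    rw [← this]
    refine mul_le_mul_of_nonneg_left ?_ (by positivity)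
    refine intervalIntegral.integral_mono_on hpi.le
      ((by fun_prop : Continuous _).intervalIntegrable _ _)
      ((by fun_prop : Continuous _).intervalIntegrable _ _) fun θ _ => ?_
    have := mul_le_mul_of_nonneg_left (hQ2 θ) (sq_nonneg (Real.sin θ))
    simp only [Nat.cast_zero, zero_add, one_mul]
    nlinarith
  have hbn : ∀ n ∈ s, |b n| ≤ (n + 1) * (J + 2 * ε) := by
    intro n hn
    rw [hco n hn, abs_mul, abs_of_pos (by positivity : (0:ℝ) < 2 / Real.pi)]
    have := hJ' 1
    rw [one_mul] at this
    rw [← this]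
    have h1 : |∫ θ in (0:ℝ)..Real.pi, Real.sin θ * q θ *
        Real.sin ((n + 1 : ℝ) * θ)| ≤ ∫ θ in (0:ℝ)..Real.pi,
        (n + 1 : ℝ) * (Real.sin θ ^ 2 * (1 * (-η θ) + 2 * ε)) := by
      refine (intervalIntegral.abs_integral_le_integral_abs hpi.le).trans ?_
      refine intervalIntegral.integral_mono_on hpi.le
        ((by fun_prop : Continuous _).intervalIntegrable _ _)
        ((by fun_prop : Continuous _).intervalIntegrable _ _) fun θ _ => ?_
      have hq : |q θ| ≤ 1 * (-η θ) + 2 * ε := by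
        rw [abs_le]
        have := hη0 θ
        constructor
        · linarith [hQ1 θ]
        · linarith [hQ2 θ]
      rw [abs_mul, abs_mul]
      calc |Real.sin θ| * |q θ| * |Real.sin ((n + 1 : ℝ) * θ)|
          ≤ |Real.sin θ| * (1 * (-η θ) + 2 * ε) * ((n + 1) * |Real.sin θ|) := by
            gcongr
            · exact mul_nonneg (abs_nonneg _) ((abs_nonneg _).trans hq)
            · exact tc_abs_sin n θ
        _ = _ := by rw [← sq_abs (Real.sin θ)]; ring
    rw [intervalIntegral.integral_const_mul] at h1
    calc _ ≤ 2 / Real.pi * ((n + 1 : ℝ) * ∫ θ in (0:ℝ)..Real.pi,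
        (Real.sin θ ^ 2 * (1 * (-η θ) + 2 * ε))) := by gcongr
      _ = _ := by ring
  have hJ0 : 0 ≤ J + 2 * ε := by
    have := (abs_nonneg _).trans (hbn 0 h0s)
    simpa using this
  have hmain := tc_maxmod F hF hF1 R hR s b (fun θ hθ => by
    refine (hψ θ hθ).trans (Real.exp_le_exp.2 ?_)
    rw [← hsb θ]
    exact mul_le_mul_of_nonneg_left (hQ1 θ) (Real.sin_nonneg_of_nonneg_of_le_pi hθ.1 hθ.2))
    z hz (by linarith)
  refine hmain.trans (Real.exp_le_exp.2 ?_)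
  have him : (z / R).im = z.im / R := by simp
  have hnorm : ‖z / R‖ = ‖z‖ / R := by simp [abs_of_pos hR]
  have hy : 0 < z.im / R := by positivity
  have hρ : ‖z‖ / R ≤ 1 / 2 := by rw [div_le_iff₀ hR]; linarith
  rw [← Finset.add_sum_erase s _ h0s]
  have hrest : ∑ n ∈ s.erase 0, b n * ((z / R) ^ (n + 1)).im ≤
      (z.im / R) * ((J + 2 * ε) * (K * (‖z‖ / R))) := by
    calc ∑ n ∈ s.erase 0, b n * ((z / R) ^ (n + 1)).im
        ≤ ∑ n ∈ s.erase 0, (z.im / R) * (J + 2 * ε) * (((n : ℝ) + 1) ^ 2 * (‖z‖ / R) ^ n) := by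
          refine Finset.sum_le_sum fun n hn => ?_
          refine (le_abs_self _).trans ?_
          rw [abs_mul]
          have h1 := hbn n (Finset.mem_of_mem_erase hn)
          have h2 := tc_im_pow n (z / R)
          rw [him, hnorm, abs_of_pos hy] at h2
          calc _ ≤ ((n + 1) * (J + 2 * ε)) * ((n + 1) * (z.im / R * (‖z‖ / R) ^ n)) :=
                mul_le_mul h1 h2 (abs_nonneg _) (by positivity)
            _ = _ := by ring
      _ ≤ _ := by
          rw [← Finset.mul_sum, mul_assoc]
          have := hK s (‖z‖ / R) (by positivity) hρ
          gcongr
  have h0 : b 0 * ((z / R) ^ (0 + 1)).im ≤ (z.im / R) * (-J + 2 * ε) := by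
    rw [zero_add, pow_one, him, mul_comm]
    gcongr
  linarith

lemma tc_key (K : ℝ) (hK0 : 0 ≤ K) (hK : ∀ (s : Finset ℕ) (ρ : ℝ), 0 ≤ ρ → ρ ≤ 1/2 →
    ∑ n ∈ s.erase 0, ((n : ℝ) + 1) ^ 2 * ρ ^ n ≤ K * ρ)
    (F : ℂ → ℂ) (hF : Differentiable ℂ F) (hF1 : ∀ z : ℂ, 0 ≤ z.im → ‖F z‖ ≤ 1)
    (R : ℝ) (hR : 0 < R) (ψ : ℝ → ℝ) (hψc : ContinuousOn ψ (Set.Icc (-1) 1))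
    (hψ0 : ∀ c ∈ Set.Icc (-1 : ℝ) 1, ψ c ≤ 0)
    (hψ : ∀ θ ∈ Set.Icc 0 Real.pi, ‖F (R * Complex.exp (θ * I))‖ ≤
      Real.exp (Real.sin θ * ψ (Real.cos θ)))
    (J : ℝ) (hJ : J = (2 / Real.pi) * ∫ θ in (0:ℝ)..Real.pi, Real.sin θ ^ 2 * (-ψ (Real.cos θ)))
    (z : ℂ) (hz : 0 < z.im) (hzR : ‖z‖ ≤ R / 2) :
    ‖F z‖ ≤ Real.exp (-(J / R) * z.im * (1 - K * ‖z‖ / R)) := by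
  have hlim : Tendsto (fun ε : ℝ => Real.exp ((z.im / R) * ((-J + 2 * ε) +
      (J + 2 * ε) * (K * (‖z‖ / R))))) (𝓝[>] 0)
      (𝓝 (Real.exp ((z.im / R) * ((-J + 2 * 0) + (J + 2 * 0) * (K * (‖z‖ / R)))))) :=
    ((by fun_prop : Continuous fun ε : ℝ => Real.exp ((z.im / R) * ((-J + 2 * ε) +
      (J + 2 * ε) * (K * (‖z‖ / R))))).tendsto 0).mono_left nhdsWithin_le_nhds
  have := ge_of_tendsto hlim (eventually_mem_nhdsWithin.mono fun ε hε =>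
    tc_key_eps K hK0 hK F hF hF1 R hR ψ hψc hψ0 hψ J hJ z hz hzR ε hε)
  refine this.trans (Real.exp_le_exp.2 (le_of_eq ?_))
  field_simp
  ring

/-- Truncated logarithm of `‖F‖` on the half circle, divided by the (truncated) sine. -/
noncomputable def tcPsi (F : ℂ → ℂ) (R M δ : ℝ) (c : ℝ) : ℝ :=
  Real.log (max ‖F (R * (c + Real.sqrt (1 - c ^ 2) * I))‖ (Real.exp (-M))) /
    max (Real.sqrt (1 - c ^ 2)) δ

lemma tcPsi_cont (F : ℂ → ℂ) (hF : Continuous F) (R M δ : ℝ) (hδ : 0 < δ) :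
    Continuous (tcPsi F R M δ) := by
  unfold tcPsi
  refine Continuous.div (Continuous.log (by fun_prop) fun c => ?_) (by fun_prop) fun c => ?_
  · exact (lt_max_of_lt_right (Real.exp_pos _)).ne'
  · exact (lt_max_of_lt_right hδ).ne'

lemma tcPsi_cos (F : ℂ → ℂ) (R M δ θ : ℝ) (hθ : θ ∈ Set.Icc 0 Real.pi) :
    tcPsi F R M δ (Real.cos θ) =
      Real.log (max ‖F (R * Complex.exp (θ * I))‖ (Real.exp (-M))) / max (Real.sin θ) δ := by
  have h : Real.sqrt (1 - Real.cos θ ^ 2) = Real.sin θ := by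
    rw [← Real.sin_sq, Real.sqrt_sq (Real.sin_nonneg_of_nonneg_of_le_pi hθ.1 hθ.2)]
  have h2 : Complex.exp (θ * I) = (Real.cos θ : ℂ) + (Real.sin θ : ℂ) * I := by
    rw [Complex.exp_mul_I]; simp
  rw [tcPsi, h, h2]

lemma tcPsi_nonpos (F : ℂ → ℂ) (hF1 : ∀ z : ℂ, 0 ≤ z.im → ‖F z‖ ≤ 1) (R M δ : ℝ) (hR : 0 < R)
    (hM : 0 ≤ M) (hδ : 0 < δ) (c : ℝ) : tcPsi F R M δ c ≤ 0 := by
  unfold tcPsi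
  refine div_nonpos_of_nonpos_of_nonneg (Real.log_nonpos ?_ ?_) ?_
  · exact le_max_of_le_left (norm_nonneg _)
  · refine max_le (hF1 _ ?_) (Real.exp_le_one_iff.2 (by linarith))
    simp; positivity
  · exact le_max_of_le_right hδ.le

lemma tcPsi_bound (F : ℂ → ℂ) (hF1 : ∀ z : ℂ, 0 ≤ z.im → ‖F z‖ ≤ 1) (R M δ : ℝ) (hR : 0 < R)
    (hM : 0 ≤ M) (hδ : 0 < δ) (θ : ℝ) (hθ : θ ∈ Set.Icc 0 Real.pi) :
    ‖F (R * Complex.exp (θ * I))‖ ≤ Real.exp (Real.sin θ * tcPsi F R M δ (Real.cos θ)) := by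
  have h0 := tcPsi_nonpos F hF1 R M δ hR hM hδ (Real.cos θ)
  have hs := Real.sin_nonneg_of_nonneg_of_le_pi hθ.1 hθ.2
  have hm : 0 < max (Real.sin θ) δ := lt_max_of_lt_right hδ
  have h1 : Real.log (max ‖F (R * Complex.exp (θ * I))‖ (Real.exp (-M))) =
      max (Real.sin θ) δ * tcPsi F R M δ (Real.cos θ) := by
    rw [tcPsi_cos F R M δ θ hθ]; field_simp
  calc _ ≤ max ‖F (R * Complex.exp (θ * I))‖ (Real.exp (-M)) := le_max_left _ _
    _ = Real.exp (max (Real.sin θ) δ * tcPsi F R M δ (Real.cos θ)) := by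
      rw [← h1, Real.exp_log (lt_max_of_lt_right (Real.exp_pos _))]
    _ ≤ _ := Real.exp_le_exp.2 (mul_le_mul_of_nonpos_right (le_max_left _ _) h0)

lemma tcPsi_add (F G : ℂ → ℂ) (hF1 : ∀ z : ℂ, 0 ≤ z.im → ‖F z‖ ≤ 1)
    (hG1 : ∀ z : ℂ, 0 ≤ z.im → ‖G z‖ ≤ 1) (T : ℝ) (hT : 0 ≤ T)
    (hFG : ∀ z : ℂ, 0 ≤ z.im → ‖F z * G z‖ ≤ Real.exp (-T * z.im))
    (R δ : ℝ) (hR : 0 < R) (hδ : 0 < δ) (θ : ℝ) (hθ : θ ∈ Set.Icc 0 Real.pi) :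
    T * R * (Real.sin θ ^ 2 - δ ^ 2) ≤ Real.sin θ ^ 2 * (-tcPsi F R (T * R) δ (Real.cos θ)) +
      Real.sin θ ^ 2 * (-tcPsi G R (T * R) δ (Real.cos θ)) := by
  have hs := Real.sin_nonneg_of_nonneg_of_le_pi hθ.1 hθ.2
  have hs1 := Real.sin_le_one θ
  have hm : 0 < max (Real.sin θ) δ := lt_max_of_lt_right hδ
  have hTR : 0 ≤ T * R := by positivity
  rw [tcPsi_cos F _ _ _ _ hθ, tcPsi_cos G _ _ _ _ hθ]
  set w := (R : ℂ) * Complex.exp (θ * I) with hw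
  have hwim : w.im = R * Real.sin θ := by
    rw [hw, Complex.im_ofReal_mul, Complex.exp_ofReal_mul_I_im]
  have hwim0 : 0 ≤ w.im := by rw [hwim]; positivity
  have hlog : Real.log (max ‖F w‖ (Real.exp (-(T * R)))) +
      Real.log (max ‖G w‖ (Real.exp (-(T * R)))) ≤ - (T * R) * Real.sin θ := by
    have p1 : 0 < max ‖F w‖ (Real.exp (-(T * R))) := lt_max_of_lt_right (Real.exp_pos _)
    have p2 : 0 < max ‖G w‖ (Real.exp (-(T * R))) := lt_max_of_lt_right (Real.exp_pos _)
    rw [← Real.log_mul p1.ne' p2.ne', Real.log_le_iff_le_exp (mul_pos p1 p2)]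
    have e1 : Real.exp (-(T * R)) ≤ 1 := Real.exp_le_one_iff.2 (by linarith)
    have e2 : Real.exp (-(T * R)) ≤ Real.exp (-(T * R) * Real.sin θ) :=
      Real.exp_le_exp.2 (by nlinarith)
    have hf := hF1 w hwim0
    have hg := hG1 w hwim0
    have hfg := hFG w hwim0
    rw [norm_mul, hwim, ← mul_assoc, neg_mul] at hfg
    rcases le_total ‖F w‖ (Real.exp (-(T * R))) with hc | hc
    · rw [max_eq_right hc]
      calc _ ≤ Real.exp (-(T * R)) * 1 := by gcongr; exact max_le hg e1
        _ ≤ _ := by rw [mul_one]; exact e2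
    · rcases le_total ‖G w‖ (Real.exp (-(T * R))) with hd | hd
      · rw [max_eq_right hd]
        calc _ ≤ 1 * Real.exp (-(T * R)) := by gcongr; exact max_le hf e1
          _ ≤ _ := by rw [one_mul]; exact e2
      · rw [max_eq_left hc, max_eq_left hd]; exact hfg
  rw [← mul_add, ← neg_add, ← add_div]
  have h2 : T * R * Real.sin θ / max (Real.sin θ) δ ≤
    -((Real.log (max ‖F w‖ (Real.exp (-(T * R)))) +
      Real.log (max ‖G w‖ (Real.exp (-(T * R))))) / max (Real.sin θ) δ) := by
    rw [← neg_div]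
    gcongr
    linarith
  refine le_trans ?_ (mul_le_mul_of_nonneg_left h2 (sq_nonneg _))
  rcases le_total δ (Real.sin θ) with hc | hc
  · rw [max_eq_left hc, mul_div_assoc, div_self (by linarith)]
    nlinarith [mul_nonneg hTR (sq_nonneg δ)]
  · have : Real.sin θ ^ 2 - δ ^ 2 ≤ 0 := by nlinarith
    refine (mul_nonpos_of_nonneg_of_nonpos hTR this).trans ?_
    positivity

lemma tc_pair (K : ℝ) (hK0 : 0 ≤ K) (hK : ∀ (s : Finset ℕ) (ρ : ℝ), 0 ≤ ρ → ρ ≤ 1/2 →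
    ∑ n ∈ s.erase 0, ((n : ℝ) + 1) ^ 2 * ρ ^ n ≤ K * ρ)
    (F G : ℂ → ℂ) (hF : Differentiable ℂ F) (hG : Differentiable ℂ G)
    (hF1 : ∀ z : ℂ, 0 ≤ z.im → ‖F z‖ ≤ 1)
    (hG1 : ∀ z : ℂ, 0 ≤ z.im → ‖G z‖ ≤ 1) (T : ℝ) (hT : 0 ≤ T)
    (hFG : ∀ z : ℂ, 0 ≤ z.im → ‖F z * G z‖ ≤ Real.exp (-T * z.im))
    (R : ℝ) (hR : 0 < R) : ∃ α β : ℝ, 0 ≤ α ∧ 0 ≤ β ∧ T * (1 - 2 * (1 / R) ^ 2) ≤ α + β ∧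
      ∀ z : ℂ, 0 < z.im → ‖z‖ ≤ R / 2 →
        ‖F z‖ ≤ Real.exp (-α * z.im * (1 - K * ‖z‖ / R)) ∧
        ‖G z‖ ≤ Real.exp (-β * z.im * (1 - K * ‖z‖ / R)) := by
  have hpi := Real.pi_pos
  have hδ : 0 < 1 / R := by positivity
  have hTR : 0 ≤ T * R := by positivity
  set pF := tcPsi F R (T * R) (1 / R) with hpF
  set pG := tcPsi G R (T * R) (1 / R) with hpG
  have cF : Continuous pF := tcPsi_cont F hF.continuous R _ _ hδ
  have cG : Continuous pG := tcPsi_cont G hG.continuous R _ _ hδ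
  have nF : ∀ c, pF c ≤ 0 := tcPsi_nonpos F hF1 R _ _ hR hTR hδ
  have nG : ∀ c, pG c ≤ 0 := tcPsi_nonpos G hG1 R _ _ hR hTR hδ
  have bF := tcPsi_bound F hF1 R _ _ hR hTR hδ
  have bG := tcPsi_bound G hG1 R _ _ hR hTR hδ
  have hadd := tcPsi_add F G hF1 hG1 T hT hFG R _ hR hδ
  rw [← hpF] at bF
  rw [← hpG] at bG
  simp only [← hpF, ← hpG] at hadd
  clear_value pF pG
  set JF := (2 / Real.pi) * ∫ θ in (0:ℝ)..Real.pi, Real.sin θ ^ 2 * (-pF (Real.cos θ)) with hJF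
  set JG := (2 / Real.pi) * ∫ θ in (0:ℝ)..Real.pi, Real.sin θ ^ 2 * (-pG (Real.cos θ)) with hJG
  refine ⟨JF / R, JG / R, ?_, ?_, ?_, fun z hz hzR => ⟨?_, ?_⟩⟩
  · refine div_nonneg (mul_nonneg (by positivity)
      (intervalIntegral.integral_nonneg hpi.le fun θ _ => ?_)) hR.le
    exact mul_nonneg (sq_nonneg _) (by linarith [nF (Real.cos θ)])
  · refine div_nonneg (mul_nonneg (by positivity)
      (intervalIntegral.integral_nonneg hpi.le fun θ _ => ?_)) hR.le
    exact mul_nonneg (sq_nonneg _) (by linarith [nG (Real.cos θ)])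
  · rw [← add_div, le_div_iff₀ hR, hJF, hJG, ← mul_add, ← intervalIntegral.integral_add
      ((by fun_prop : Continuous _).intervalIntegrable _ _)
      ((by fun_prop : Continuous _).intervalIntegrable _ _)]
    have h1 : ∫ θ in (0:ℝ)..Real.pi, T * R * (Real.sin θ ^ 2 - (1 / R) ^ 2) =
        T * R * (Real.pi / 2 - Real.pi * (1 / R) ^ 2) := by
      rw [intervalIntegral.integral_const_mul, intervalIntegral.integral_sub
        ((by fun_prop : Continuous _).intervalIntegrable _ _)
        ((by fun_prop : Continuous _).intervalIntegrable _ _), intervalIntegral.integral_const,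
        integral_sin_sq]
      simp
    calc _ = 2 / Real.pi * (T * R * (Real.pi / 2 - Real.pi * (1 / R) ^ 2)) := by
            field_simp
      _ ≤ _ := by
            rw [← h1]
            refine mul_le_mul_of_nonneg_left ?_ (by positivity)
            exact intervalIntegral.integral_mono_on hpi.le
              ((by fun_prop : Continuous _).intervalIntegrable _ _)
              ((by fun_prop : Continuous _).intervalIntegrable _ _) hadd
  · exact tc_key K hK0 hK F hF hF1 R hR pF cF.continuousOn (fun c _ => nF c) bF JF hJF z hz hzR
  · exact tc_key K hK0 hK G hG hG1 R hR pG cG.continuousOn (fun c _ => nG c) bG JG hJG z hz hzR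

theorem tc_analytic (F G : ℂ → ℂ) (hF : Differentiable ℂ F) (hG : Differentiable ℂ G)
    (hF1 : ∀ z : ℂ, 0 ≤ z.im → ‖F z‖ ≤ 1)
    (hG1 : ∀ z : ℂ, 0 ≤ z.im → ‖G z‖ ≤ 1) (T : ℝ) (hT : 0 ≤ T)
    (hFG : ∀ z : ℂ, 0 ≤ z.im → ‖F z * G z‖ ≤ Real.exp (-T * z.im)) :
    ∃ A ∈ Set.Icc 0 T, ∀ z : ℂ, 0 < z.im → ‖F z‖ ≤ Real.exp (-A * z.im) ∧
      ‖G z‖ ≤ Real.exp (-(T - A) * z.im) := by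
  obtain ⟨K, hK0, hK⟩ := tc_const
  have hex := fun n : ℕ => tc_pair K hK0 hK F G hF hG hF1 hG1 T hT hFG ((n : ℝ) + 1) (by positivity)
  choose α β hα hβ hαβ hb using hex
  obtain ⟨A, hA, φ, hφ, hlim⟩ := (isCompact_Icc (a := (0:ℝ)) (b := T)).tendsto_subseq
    (x := fun n => min (α n) T) (fun n => ⟨le_min (hα n) hT, min_le_right _ _⟩)
  refine ⟨A, hA, fun z hz => ?_⟩
  have hinv : Tendsto (fun n : ℕ => 1 / (((φ n : ℕ) : ℝ) + 1)) atTop (𝓝 0) :=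
    tendsto_one_div_add_atTop_nhds_zero_nat.comp hφ.tendsto_atTop
  have hev : ∀ᶠ n : ℕ in atTop, K * ‖z‖ * (1 / (((φ n : ℕ) : ℝ) + 1)) ≤ 1 ∧
      ‖z‖ * (1 / (((φ n : ℕ) : ℝ) + 1)) ≤ 1 / 2 := by
    have h1 := (hinv.const_mul (K * ‖z‖))
    have h2 := (hinv.const_mul ‖z‖)
    rw [mul_zero] at h1 h2
    exact (h1.eventually (eventually_le_nhds (by norm_num))).and
      (h2.eventually (eventually_le_nhds (by norm_num)))
  have hb' : ∀ᶠ n : ℕ in atTop,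
      ‖F z‖ ≤ Real.exp (-(min (α (φ n)) T) * z.im *
        (1 - K * ‖z‖ * (1 / (((φ n : ℕ) : ℝ) + 1)))) ∧
      ‖G z‖ ≤ Real.exp (-(T * (1 - 2 * (1 / (((φ n : ℕ) : ℝ) + 1)) ^ 2) - min (α (φ n)) T) * z.im *
        (1 - K * ‖z‖ * (1 / (((φ n : ℕ) : ℝ) + 1)))) := by
    filter_upwards [hev] with n hn
    have hpos : (0:ℝ) < ((φ n : ℕ) : ℝ) + 1 := by positivity
    have hzn : ‖z‖ ≤ (((φ n : ℕ) : ℝ) + 1) / 2 := by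
      have := hn.2
      rw [mul_one_div, div_le_iff₀ hpos] at this
      linarith
    obtain ⟨h1, h2⟩ := hb (φ n) z hz hzn
    have hfac : 0 ≤ 1 - K * ‖z‖ * (1 / (((φ n : ℕ) : ℝ) + 1)) := by linarith [hn.1]
    rw [← mul_one_div] at h1 h2
    have hmin : T * (1 - 2 * (1 / (((φ n : ℕ) : ℝ) + 1)) ^ 2) - min (α (φ n)) T ≤ β (φ n) := by
      have := hαβ (φ n)
      have hsq : 0 ≤ T * (2 * (1 / (((φ n : ℕ) : ℝ) + 1)) ^ 2) := by positivity
      rcases le_total (α (φ n)) T with hc | hc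
      · rw [min_eq_left hc]; linarith
      · rw [min_eq_right hc]; linarith [hβ (φ n)]
    refine ⟨h1.trans (Real.exp_le_exp.2 ?_), h2.trans (Real.exp_le_exp.2 ?_)⟩
    · gcongr
      exact min_le_left _ _
    · gcongr
  have hlim' : Tendsto (fun n => min (α (φ n)) T) atTop (𝓝 A) := hlim
  constructor
  · have ht := (((hlim'.neg.mul_const z.im).mul
      ((hinv.const_mul (K * ‖z‖)).const_sub 1))).rexp
    refine ge_of_tendsto (by simpa using ht) (hb'.mono fun n hn => hn.1)
  · have ht := (((((((hinv.pow 2).const_mul 2).const_sub 1).const_mul T).sub hlim').neg.mul_const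
      z.im).mul ((hinv.const_mul (K * ‖z‖)).const_sub 1)).rexp
    have e : -(T * (1 - 2 * 0 ^ 2) - A) * z.im * (1 - K * ‖z‖ * 0) = -(T - A) * z.im := by ring
    rw [e] at ht
    exact ge_of_tendsto ht (hb'.mono fun n hn => hn.2)

/-- Fourier-Laplace transform. -/
noncomputable def tcL (f : ℝ → ℂ) (z : ℂ) : ℂ := ∫ t, f t * Complex.exp (I * z * t)

lemma tc_norm_exp (z : ℂ) (t : ℝ) : ‖Complex.exp (I * z * t)‖ = Real.exp (-z.im * t) := by
  rw [Complex.norm_exp]; simp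

lemma tcL_int (f : ℝ → ℂ) (hf : Integrable f) (a : ℝ) (h0 : ∀ t, t ∉ Set.Icc 0 a → f t = 0)
    (z : ℂ) : Integrable (fun t : ℝ => f t * Complex.exp (I * z * t)) := by
  have hb : ∀ t : ℝ, ‖f t * Complex.exp (I * z * t)‖ ≤ ‖(Real.exp (|z.im| * |a|) : ℂ) * f t‖ := by
    intro t
    by_cases ht : t ∈ Set.Icc 0 a
    · rw [norm_mul, norm_mul, tc_norm_exp, mul_comm, Complex.norm_real,
        Real.norm_eq_abs, Real.abs_exp]
      refine mul_le_mul_of_nonneg_right (Real.exp_le_exp.2 ?_) (norm_nonneg _)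
      calc -z.im * t ≤ |z.im| * |t| := by
            rw [← abs_mul, neg_mul]; exact neg_le_abs _
        _ ≤ _ := by
            exact mul_le_mul_of_nonneg_left (abs_le_abs_of_nonneg ht.1 ht.2) (abs_nonneg _)
    · simp [h0 t ht]
  refine (hf.const_mul (Real.exp (|z.im| * |a|) : ℂ)).mono
    (hf.aestronglyMeasurable.mul (by fun_prop : Continuous _).aestronglyMeasurable)
    (Eventually.of_forall hb)

lemma tcL_diff (f : ℝ → ℂ) (hf : Integrable f) (a : ℝ) (h0 : ∀ t, t ∉ Set.Icc 0 a → f t = 0) :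
    Differentiable ℂ (tcL f) := by
  intro z₀
  have hd := (hasDerivAt_integral_of_dominated_loc_of_deriv_le (μ := volume)
    (F := fun z (t : ℝ) => f t * Complex.exp (I * z * t))
    (F' := fun z (t : ℝ) => f t * (Complex.exp (I * z * t) * (I * t)))
    (bound := fun t => ‖f t‖ * (Real.exp ((‖z₀‖ + 1) * |a|) * |a|))
    (x₀ := z₀) (Metric.ball_mem_nhds z₀ one_pos) ?_ (tcL_int f hf a h0 z₀) ?_ ?_ ?_ ?_).2
  · exact hd.differentiableAt
  · exact Eventually.of_forall fun z => (tcL_int f hf a h0 z).aestronglyMeasurable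
  · exact hf.aestronglyMeasurable.mul (by fun_prop : Continuous _).aestronglyMeasurable
  · refine Eventually.of_forall fun t z hz => ?_
    by_cases ht : t ∈ Set.Icc 0 a
    · have hta : |t| ≤ |a| := abs_le_abs_of_nonneg ht.1 ht.2
      have hzn : ‖z‖ ≤ ‖z₀‖ + 1 := by
        have h1 : ‖z - z₀‖ < 1 := by simpa [dist_eq_norm] using hz
        have h2 := norm_sub_norm_le z z₀
        linarith
      rw [norm_mul, norm_mul, norm_mul, tc_norm_exp, norm_I, one_mul, Complex.norm_real,
        Real.norm_eq_abs]
      refine mul_le_mul_of_nonneg_left (mul_le_mul (Real.exp_le_exp.2 ?_) hta (abs_nonneg _)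
        (Real.exp_pos _).le) (norm_nonneg _)
      calc -z.im * t ≤ |z.im| * |t| := by
            rw [← abs_mul, neg_mul]; exact neg_le_abs _
        _ ≤ _ := by
            gcongr
            exact (Complex.abs_im_le_norm z).trans hzn
    · simp [h0 t ht]
  · exact hf.norm.mul_const _
  · refine Eventually.of_forall fun t z _ => ?_
    refine HasDerivAt.const_mul _ (HasDerivAt.cexp ?_)
    have := ((hasDerivAt_id z).const_mul I).mul_const (t : ℂ)
    simpa using this

lemma tcL_bound (f : ℝ → ℂ) (hf : Integrable f) (A : ℝ) (z : ℂ)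
    (h : ∀ t, f t ≠ 0 → 0 ≤ z.im * (t - A)) :
    ‖tcL f z‖ ≤ Real.exp (-A * z.im) * ∫ t, ‖f t‖ := by
  unfold tcL
  rw [← integral_const_mul]
  refine norm_integral_le_of_norm_le (hf.norm.const_mul _) (Eventually.of_forall fun t => ?_)
  by_cases ht : f t = 0
  · simp [ht]
  · rw [norm_mul, tc_norm_exp, mul_comm]
    refine mul_le_mul_of_nonneg_right (Real.exp_le_exp.2 ?_) (norm_nonneg _)
    have := h t ht
    linarith

open FourierTransform in
lemma tc_fourier_inj (f : ℝ → ℂ) (hf : Integrable f) (h : ∀ x : ℝ, tcL f x = 0) :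
    ∀ᵐ t, f t = 0 := by
  have hF : ∀ w : ℝ, 𝓕 f w = 0 := by
    intro w
    rw [Real.fourier_real_eq_integral_exp_smul]
    rw [← h (-2 * Real.pi * w), tcL]
    refine integral_congr_ae (Eventually.of_forall fun t => ?_)
    simp only [smul_eq_mul]
    rw [mul_comm]
    congr 2
    push_cast; ring
  apply ae_eq_zero_of_integral_contDiff_smul_eq_zero hf.locallyIntegrable
  intro g g_smooth g_cpt
  have hg₁ : HasCompactSupport (Complex.ofRealCLM ∘ g) := g_cpt.comp_left rfl
  have hg₂ : ContDiff ℝ (⊤ : ℕ∞) (Complex.ofRealCLM ∘ g) := by fun_prop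
  set G : SchwartzMap ℝ ℂ := hg₁.toSchwartzMap hg₂ with hG
  set H : SchwartzMap ℝ ℂ := 𝓕⁻ G with hH
  have hHG : 𝓕 H = G := FourierTransform.fourier_fourierInv_eq G
  have hG' : ∀ x, G x = (g x : ℂ) := fun x => by simp [hG]
  have hfl := VectorFourier.integral_fourierIntegral_smul_eq_flip (L := innerₗ ℝ) (μ := volume)
    (ν := volume) Real.continuous_fourierChar continuous_inner H.integrable hf
  have e1 : ∀ ξ, VectorFourier.fourierIntegral Real.fourierChar volume (innerₗ ℝ) H ξ
      = (g ξ : ℂ) := by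
    intro ξ
    rw [← hG' ξ]
    rw [← hHG]
    rfl
  have e2 : ∀ ξ, VectorFourier.fourierIntegral Real.fourierChar volume (innerₗ ℝ).flip f ξ = 0 := by
    intro ξ
    rw [flip_innerₗ]
    exact hF ξ
  simp only [e1, e2, smul_zero, integral_zero] at hfl
  rw [← hfl]
  simp

lemma tc_pw (f : ℝ → ℂ) (hf : Integrable f) (a : ℝ) (h0 : ∀ t, t ∉ Set.Icc 0 a → f t = 0)
    (A C : ℝ) (hC : ∀ z : ℂ, 0 < z.im → ‖tcL f z‖ ≤ Real.exp (-A * z.im) * C) :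
    ∀ᵐ t, t ∈ Set.Icc 0 A → f t = 0 := by
  set f1 := (Set.Icc 0 A).indicator f with hf1
  set f2 := (Set.Icc 0 A)ᶜ.indicator f with hf2
  have i1 : Integrable f1 := hf.indicator measurableSet_Icc
  have i2 : Integrable f2 := hf.indicator measurableSet_Icc.compl
  have s1 : ∀ t, t ∉ Set.Icc 0 A → f1 t = 0 := fun t ht => Set.indicator_of_notMem ht _
  have s2 : ∀ t, t ∉ Set.Icc 0 a → f2 t = 0 := fun t ht => by
    simp [hf2, Set.indicator_apply, h0 t ht]
  have hsplit : ∀ z, tcL f z = tcL f1 z + tcL f2 z := by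
    intro z
    unfold tcL
    rw [← integral_add (tcL_int f1 i1 A s1 z) (tcL_int f2 i2 a s2 z)]
    refine integral_congr_ae (Eventually.of_forall fun t => ?_)
    simp only
    rw [← add_mul]
    congr 1
    exact (congrFun (Set.indicator_self_add_compl (Set.Icc 0 A) f) t).symm
  set Φ : ℂ → ℂ := fun z => Complex.exp (-(I * z * A)) * tcL f1 z with hΦ
  have hΦd : Differentiable ℂ Φ := by
    have := tcL_diff f1 i1 A s1
    rw [hΦ]; fun_prop
  have hne : ∀ z : ℂ, ‖Complex.exp (-(I * z * A))‖ = Real.exp (A * z.im) := by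
    intro z; rw [Complex.norm_exp]; simp [mul_comm]
  have hcancel : ∀ z : ℂ, Real.exp (A * z.im) * Real.exp (-A * z.im) = 1 := by
    intro z; rw [← Real.exp_add]; simp
  have hΦb : ∀ z, ‖Φ z‖ ≤ |C| + (∫ t, ‖f1 t‖) + ∫ t, ‖f2 t‖ := by
    intro z
    have p1 : 0 ≤ ∫ t, ‖f1 t‖ := integral_nonneg fun _ => norm_nonneg _
    have p2 : 0 ≤ ∫ t, ‖f2 t‖ := integral_nonneg fun _ => norm_nonneg _
    have hn : ‖Φ z‖ = Real.exp (A * z.im) * ‖tcL f1 z‖ := by rw [hΦ]; simp only [norm_mul, hne]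
    rw [hn]
    rcases le_or_gt z.im 0 with hz | hz
    · have hb := tcL_bound f1 i1 A z (fun t ht => by
        have : t ∈ Set.Icc 0 A := by by_contra hc; exact ht (s1 t hc)
        nlinarith [this.2])
      calc _ ≤ Real.exp (A * z.im) * (Real.exp (-A * z.im) * ∫ t, ‖f1 t‖) := by gcongr
        _ = ∫ t, ‖f1 t‖ := by rw [← mul_assoc, hcancel, one_mul]
        _ ≤ _ := by linarith [abs_nonneg C]
    · have hb := tcL_bound f2 i2 A z (fun t ht => by
        have h1 : t ∈ Set.Icc 0 a := by by_contra hc; exact ht (s2 t hc)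
        have h2 : t ∉ Set.Icc 0 A := by
          intro hc; apply ht; simp [hf2, hc.1, hc.2]
        have h3 : A < t := by
          by_contra hc; exact h2 ⟨h1.1, not_lt.1 hc⟩
        exact mul_nonneg hz.le (by linarith))
      have h1 : ‖tcL f1 z‖ ≤ Real.exp (-A * z.im) * (|C| + ∫ t, ‖f2 t‖) := by
        have e : tcL f1 z = tcL f z - tcL f2 z := by rw [hsplit z]; ring
        rw [e, mul_add]
        refine (norm_sub_le _ _).trans (add_le_add ((hC z hz).trans ?_) hb)
        gcongr
        exact le_abs_self C
      calc _ ≤ Real.exp (A * z.im) * (Real.exp (-A * z.im) * (|C| + ∫ t, ‖f2 t‖)) := by gcongr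
        _ = |C| + ∫ t, ‖f2 t‖ := by rw [← mul_assoc, hcancel, one_mul]
        _ ≤ _ := by linarith
  obtain ⟨c, hc⟩ := hΦd.exists_const_forall_eq_of_bounded
    (isBounded_iff_forall_norm_le.2 ⟨_, by rintro _ ⟨z, rfl⟩; exact hΦb z⟩)
  have hlim : Tendsto (fun n : ℕ => Φ (-(n : ℂ) * I)) atTop (𝓝 (∫ _ : ℝ, (0 : ℂ))) := by
    have hform : ∀ n : ℕ, Φ (-(n : ℂ) * I) =
        ∫ t, f1 t * (Real.exp ((n : ℝ) * (t - A)) : ℂ) := by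
      intro n
      simp only [hΦ, tcL]
      rw [← integral_const_mul]
      refine integral_congr_ae (Eventually.of_forall fun t => ?_)
      simp only
      rw [mul_left_comm, ← Complex.exp_add]
      push_cast
      congr 2
      linear_combination ((n : ℂ) * A - (n : ℂ) * t) * I_sq
    simp_rw [hform]
    refine tendsto_integral_of_dominated_convergence (fun t => ‖f1 t‖) (fun n => ?_) i1.norm
      (fun n => Eventually.of_forall fun t => ?_) ?_
    · exact i1.aestronglyMeasurable.mul (by fun_prop : Continuous _).aestronglyMeasurable
    · by_cases ht : t ∈ Set.Icc 0 A
      · rw [norm_mul, Complex.norm_real, Real.norm_eq_abs, Real.abs_exp]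
        refine mul_le_of_le_one_right (norm_nonneg _) (Real.exp_le_one_iff.2 ?_)
        exact mul_nonpos_of_nonneg_of_nonpos (Nat.cast_nonneg _) (by linarith [ht.2])
      · simp [s1 t ht]
    · have hA : ∀ᵐ t : ℝ, t ≠ A := by
        simp [ae_iff, measure_singleton]
      filter_upwards [hA] with t htA
      by_cases ht : t ∈ Set.Icc 0 A
      · have hlt : t - A < 0 := by
          have := lt_of_le_of_ne ht.2 htA
          linarith
        have h1 : Tendsto (fun n : ℕ => Real.exp ((n : ℝ) * (t - A))) atTop (𝓝 0) :=
          Real.tendsto_exp_atBot.comp (tendsto_natCast_atTop_atTop.atTop_mul_const_of_neg hlt)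
        have h2 := (Complex.continuous_ofReal.tendsto 0).comp h1
        have h3 := h2.const_mul (f1 t)
        simpa using h3
      · simp [s1 t ht]
  have hc0 : c = 0 := by
    simp only [hc, integral_zero] at hlim
    exact tendsto_nhds_unique tendsto_const_nhds hlim
  have hzero : ∀ x : ℝ, tcL f1 x = 0 := by
    intro x
    have := hc x
    rw [hc0] at this
    exact (mul_eq_zero.1 this).resolve_left (Complex.exp_ne_zero _)
  filter_upwards [tc_fourier_inj f1 i1 hzero] with t ht htA
  rwa [hf1, Set.indicator_of_mem htA] at ht

lemma tc_conv (f g : ℝ → ℂ) (hf : Integrable f) (hg : Integrable g) (a : ℝ)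
    (hf0 : ∀ t, t ∉ Set.Icc 0 a → f t = 0) (hg0 : ∀ t, t ∉ Set.Icc 0 a → g t = 0)
    (hc : ∀ᵐ s : ℝ, s ≤ a → ∫ τ, g τ * f (s - τ) = 0) :
    ∃ C : ℝ, 0 ≤ C ∧ ∀ z : ℂ, 0 ≤ z.im → ‖tcL g z * tcL f z‖ ≤ Real.exp (-a * z.im) * C := by
  set h : ℝ → ℂ := fun s => ∫ τ, g τ * f (s - τ) with hh
  have h_integrable : Integrable h :=
    Integrable.integrable_convolution (ContinuousLinearMap.mul ℂ ℂ) hg hf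
  refine ⟨∫ s, ‖h s‖, integral_nonneg fun _ => norm_nonneg _, fun z hz => ?_⟩
  have e : tcL g z * tcL f z = ∫ s, h s * Complex.exp (I * z * s) := by
    have := integral_convolution (ContinuousLinearMap.mul ℂ ℂ) (tcL_int g hg a hg0 z)
      (tcL_int f hf a hf0 z)
    refine Eq.trans this.symm ?_
    refine integral_congr_ae (Eventually.of_forall fun s => ?_)
    simp only [hh, MeasureTheory.convolution, ContinuousLinearMap.mul_apply']
    rw [← integral_mul_const]
    refine integral_congr_ae (Eventually.of_forall fun τ => ?_)
    simp only
    have : Complex.exp (I * z * s) =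
      Complex.exp (I * z * τ) * Complex.exp (I * z * ((s - τ : ℝ) : ℂ)) := by
      rw [← Complex.exp_add]; congr 1; push_cast; ring
    rw [this]; ring
  rw [e, ← integral_const_mul]
  refine norm_integral_le_of_norm_le (h_integrable.norm.const_mul _) ?_
  filter_upwards [hc] with s hs
  rcases le_or_gt s a with hsa | hsa
  · have : h s = 0 := hs hsa
    simp [this]
  · rw [norm_mul, tc_norm_exp, mul_comm]
    refine mul_le_mul_of_nonneg_right (Real.exp_le_exp.2 ?_) (norm_nonneg _)
    nlinarith

/-- **Titchmarsh convolution theorem.** Let `ξ₁, ξ₂ ∈ L¹_ℂ(ℝ)` with support in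
`[0,∞)`, and suppose `∫₀^s ξ₁(s−τ) ξ₂(τ) dτ = 0` for almost all `s ∈ [0,a]`, where `a > 0`.
Then there are nonnegative `a₁, a₂` with `a₁ + a₂ ≥ a` such that `ξ₁ = 0` a.e. on `[0,a₁]` and
`ξ₂ = 0` a.e. on `[0,a₂]`. -/
theorem stmt10 (ξ₁ ξ₂ : ℝ → ℂ)
    (h1 : Integrable ξ₁) (h2 : Integrable ξ₂)
    (hs1 : ∀ᵐ τ ∂(volume : Measure ℝ), τ < 0 → ξ₁ τ = 0)
    (hs2 : ∀ᵐ τ ∂(volume : Measure ℝ), τ < 0 → ξ₂ τ = 0)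
    (a : ℝ) (ha : 0 < a)
    (hconv : ∀ᵐ s ∂(volume : Measure ℝ), s ∈ Set.Icc 0 a →
      ∫ τ in (0:ℝ)..s, ξ₁ (s - τ) * ξ₂ τ = 0) :
    ∃ a₁ a₂ : ℝ, 0 ≤ a₁ ∧ 0 ≤ a₂ ∧ a ≤ a₁ + a₂ ∧
      (∀ᵐ τ ∂(volume : Measure ℝ), τ ∈ Set.Icc 0 a₁ → ξ₁ τ = 0) ∧
      (∀ᵐ τ ∂(volume : Measure ℝ), τ ∈ Set.Icc 0 a₂ → ξ₂ τ = 0) := by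
  set f := (Set.Icc 0 a).indicator ξ₁ with hf
  set g := (Set.Icc 0 a).indicator ξ₂ with hg
  have fi : Integrable f := h1.indicator measurableSet_Icc
  have gi : Integrable g := h2.indicator measurableSet_Icc
  have f0 : ∀ t, t ∉ Set.Icc 0 a → f t = 0 := fun t ht => Set.indicator_of_notMem ht _
  have g0 : ∀ t, t ∉ Set.Icc 0 a → g t = 0 := fun t ht => Set.indicator_of_notMem ht _
  have hc : ∀ᵐ s : ℝ, s ≤ a → ∫ τ, g τ * f (s - τ) = 0 := by
    filter_upwards [hconv] with s hs hsa
    rcases lt_or_ge s 0 with hneg | hpos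
    · have : ∀ τ, g τ * f (s - τ) = 0 := by
        intro τ
        by_cases hτ : τ ∈ Set.Icc 0 a
        · rw [f0 (s - τ) (fun hc => by linarith [hc.1, hτ.1]), mul_zero]
        · rw [g0 τ hτ, zero_mul]
      simp [this]
    · rw [← hs ⟨hpos, hsa⟩, intervalIntegral.integral_of_le hpos, ← integral_Icc_eq_integral_Ioc,
        ← integral_indicator measurableSet_Icc]
      refine integral_congr_ae (Eventually.of_forall fun τ => ?_)
      simp only
      by_cases hτ : τ ∈ Set.Icc 0 s
      · rw [Set.indicator_of_mem hτ, hf, hg,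
          Set.indicator_of_mem (show τ ∈ Set.Icc 0 a from ⟨hτ.1, hτ.2.trans hsa⟩),
          Set.indicator_of_mem (show s - τ ∈ Set.Icc 0 a from
            ⟨by linarith [hτ.2], by linarith [hτ.1]⟩), mul_comm]
      · rw [Set.indicator_of_notMem hτ]
        by_cases hτ0 : 0 ≤ τ
        · rw [f0 (s - τ) (fun hc => hτ ⟨hτ0, by linarith [hc.1]⟩), mul_zero]
        · rw [g0 τ (fun hc => hτ0 hc.1), zero_mul]
  obtain ⟨C, hC0, hC⟩ := tc_conv f g fi gi a f0 g0 hc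
  have nf : 0 ≤ ∫ t, ‖f t‖ := integral_nonneg fun _ => norm_nonneg _
  have ng : 0 ≤ ∫ t, ‖g t‖ := integral_nonneg fun _ => norm_nonneg _
  obtain ⟨D, hD⟩ : ∃ D : ℝ, D = 1 + (∫ t, ‖f t‖) + (∫ t, ‖g t‖) + C := ⟨_, rfl⟩
  have hD1 : 1 ≤ D := by linarith
  have hDpos : 0 < D := by linarith
  have hnD : ∀ w : ℂ, ‖w / (D : ℂ)‖ = ‖w‖ / D := fun w => by
    rw [norm_div, Complex.norm_real, Real.norm_eq_abs, abs_of_pos hDpos]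
  have bd : ∀ k : ℝ → ℂ, Integrable k → (∀ t, t ∉ Set.Icc 0 a → k t = 0) → (∫ t, ‖k t‖) ≤ D →
      ∀ z : ℂ, 0 ≤ z.im → ‖tcL k z / (D : ℂ)‖ ≤ 1 := by
    intro k ki k0 kD z hz
    rw [hnD, div_le_one hDpos]
    have := tcL_bound k ki 0 z (fun t ht => by
      have h : t ∈ Set.Icc 0 a := by by_contra hc; exact ht (k0 t hc)
      rw [sub_zero]; exact mul_nonneg hz h.1)
    simp only [neg_zero, zero_mul, Real.exp_zero, one_mul] at this
    exact this.trans kD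
  obtain ⟨A, hA, hAb⟩ := tc_analytic (fun z => tcL f z / (D : ℂ)) (fun z => tcL g z / (D : ℂ))
    ((tcL_diff f fi a f0).div_const _) ((tcL_diff g gi a g0).div_const _)
    (bd f fi f0 (by linarith)) (bd g gi g0 (by linarith)) a ha.le (fun z hz => by
      rw [norm_mul, hnD, hnD, div_mul_div_comm, div_le_iff₀ (by positivity), ← norm_mul, mul_comm]
      refine (hC z hz).trans ?_
      gcongr
      nlinarith)
  refine ⟨A, a - A, hA.1, by linarith [hA.2], by linarith, ?_, ?_⟩
  · have := tc_pw f fi a f0 A D (fun z hz => by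
      have := (hAb z hz).1
      rwa [hnD, div_le_iff₀ hDpos] at this)
    filter_upwards [this] with t ht htA
    have h := ht htA
    rwa [hf, Set.indicator_of_mem (show t ∈ Set.Icc 0 a from ⟨htA.1, htA.2.trans hA.2⟩)] at h
  · have := tc_pw g gi a g0 (a - A) D (fun z hz => by
      have := (hAb z hz).2
      rwa [hnD, div_le_iff₀ hDpos] at this)
    filter_upwards [this] with t ht htA
    have h := ht htA
    rwa [hg, Set.indicator_of_mem (show t ∈ Set.Icc 0 a from
      ⟨htA.1, by linarith [htA.2, hA.1]⟩)] at h
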